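/- Let 1 ≤ d ≤ n and λ ∈ [0,1], and let D_λ : M_n(ℂ) → M_n(ℂ) be the quantum depolarizing channel D_λ(ρ) = λρ + (1−λ)(tr(ρ)/n) I_n. Then C_prod^d(D_λ) = log₂(nd) + (λ + (1−λ)/(nd)) log₂(λ + (1−λ)/(nd)) + (nd−1)((1−λ)/(nd)) log₂((1−λ)/(nd)). -/

import Mathlib

noncomputable section

open scoped BigOperators ComplexOrder
open Matrix

/-- The von Neumann entropy (base 2) `S(ρ) = −tr(ρ log₂ ρ)`, computed via the eigenvalues
(with the convention `0 log 0 = 0`). -/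
def entropy2 {ι : Type*} [Fintype ι] [DecidableEq ι] (ρ : Matrix ι ι ℂ) : ℝ :=
  if h : ρ.IsHermitian then -∑ i, h.eigenvalues i * Real.logb 2 (h.eigenvalues i) else 0

/-- The partial trace over the first tensor factor, `(tr ⊗ id)`. -/
def ptrace1 {ι κ : Type*} [Fintype ι] (X : Matrix (ι × κ) (ι × κ) ℂ) : Matrix κ κ ℂ :=
  fun u v => ∑ a : ι, X (a, u) (a, v)

/-- The partial trace over the second tensor factor, `(id ⊗ tr)`. -/
def ptrace2 {ι κ : Type*} [Fintype κ] (X : Matrix (ι × κ) (ι × κ) ℂ) : Matrix ι ι ℂ :=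
  fun a b => ∑ j : κ, X (a, j) (b, j)

/-- `id_d ⊗ N`, applying `N` to each `d × d` block. -/
def idTensor (d : ℕ) {ι κ : Type*}
    (N : Matrix ι ι ℂ → Matrix κ κ ℂ)
    (X : Matrix (Fin d × ι) (Fin d × ι) ℂ) : Matrix (Fin d × κ) (Fin d × κ) ℂ :=
  fun pq rs => N (fun u v => X (pq.1, u) (rs.1, v)) pq.2 rs.2

/-- The product-state classical capacity with `d`-dimensional entanglement assistance,
`C_prod^d(N) = sup { S(∑ λ_i N((tr_d ⊗ id)(ρ_i))) + ∑ λ_i [S((id ⊗ tr)(ρ_i)) − S((id_d ⊗ N)(ρ_i))] }`,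
the supremum running over finite ensembles of states `ρ_i` on `ℂ^d ⊗ ℂ^n`. -/
def Cprod (d : ℕ) {ι κ : Type*} [Fintype ι] [DecidableEq ι] [Fintype κ] [DecidableEq κ]
    (N : Matrix ι ι ℂ → Matrix κ κ ℂ) : ℝ :=
  sSup { r : ℝ | ∃ (k : ℕ) (w : Fin k → ℝ) (ρ : Fin k → Matrix (Fin d × ι) (Fin d × ι) ℂ),
    (∀ i, 0 ≤ w i) ∧ (∑ i, w i = 1) ∧
    (∀ i, (ρ i).PosSemidef ∧ Matrix.trace (ρ i) = 1) ∧
    r = entropy2 (∑ i, w i • N (ptrace1 (ρ i))) +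
        ∑ i, w i * (entropy2 (ptrace2 (ρ i)) - entropy2 (idTensor d N (ρ i))) }

/-- The quantum depolarizing channel `D_λ(ρ) = λρ + (1−λ)(tr(ρ)/n) I_n`. -/
def depol (n : ℕ) (lam : ℝ) (ρ : Matrix (Fin n) (Fin n) ℂ) : Matrix (Fin n) (Fin n) ℂ :=
  (lam : ℂ) • ρ + (((1 - lam) / n : ℝ) : ℂ) • Matrix.trace ρ • (1 : Matrix (Fin n) (Fin n) ℂ)

/-- The quantum erasure channel `E_λ : M_n → M_{n+1}`,
`E_λ(ρ) = block-diag(λρ, (1−λ)tr(ρ))`. -/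
def erasure (n : ℕ) (lam : ℝ) (ρ : Matrix (Fin n) (Fin n) ℂ) :
    Matrix (Fin (n + 1)) (Fin (n + 1)) ℂ :=
  fun a b =>
    if ha : (a : ℕ) < n then
      if hb : (b : ℕ) < n then (lam : ℂ) * ρ ⟨a, ha⟩ ⟨b, hb⟩ else 0
    else if (b : ℕ) < n then 0 else ((1 - lam : ℝ) : ℂ) * Matrix.trace ρ

/-!
Let `ρ = tr₂ X` be the reduced state of a state `X` on `ℂ^d ⊗ ℂ^n`, and put
`A = λ + (1 - λ)/(nd)`, `B = (1 - λ)/(nd)`. Whitening `ρ` shows `X ≤ d ρ ⊗ 1`, so that the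
output `Y = (id ⊗ D_λ) X = λ X + ((1 - λ)/n) ρ ⊗ 1` is `A T₁ + B T₂` for the positive matrices
`T₁ = X` and `T₂ = d ρ ⊗ 1 - X`, of traces `1` and `nd - 1`. Their sum is `d ρ ⊗ 1`, so the joint
convexity of the relative entropy on proportional pairs gives
`D(Y ‖ d ρ ⊗ 1) ≤ A log A + (nd - 1) B log B`. Since
`D(Y ‖ d ρ ⊗ 1) = S(ρ) - S(Y) - log d`, this bounds the entropy gain of every state of an ensemble,
while the average output has entropy at most `log n`. The uniform ensemble of the cyclic shifts of a
maximally entangled state attains both bounds: `X` is then a projection with `d ρ ⊗ 1 = 1`, and the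
shifts average to the maximally mixed output.

Joint convexity is used in its resolvent form: the parallel sum of left multiplication by `σ` and
right multiplication by `r τ` is an infimum of forms linear in `(σ, τ)`, hence superadditive, and
integrating over `r` yields the logarithm.
-/

open scoped Kronecker MatrixOrder

section ScalarInequality

theorem hasDerivAt_mul_log_add_mul {x y r : ℝ} (hx : 0 ≤ x) (hy : 0 ≤ y) (hr : 0 < r) :
    HasDerivAt (fun r => x * Real.log (x + r * y)) (x * y / (x + r * y)) r := by
  rcases hx.eq_or_lt with rfl | hx
  · simpa only [zero_mul, zero_div] using hasDerivAt_const r (0 : ℝ)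
  · have hlin : HasDerivAt (fun r => x + r * y) y r := by
      simpa using ((hasDerivAt_id r).mul_const y).const_add x
    simpa only [mul_div_assoc] using (hlin.log (by positivity)).const_mul x

theorem continuousOn_mul_log_add_mul {x y : ℝ} (hx : 0 ≤ x) (hy : 0 ≤ y) :
    ContinuousOn (fun r => x * Real.log (x + r * y)) (Set.Ici 0) := by
  rcases hx.eq_or_lt with rfl | hx
  · simpa only [zero_mul] using continuousOn_const
  · refine ContinuousOn.const_mul (ContinuousOn.log (by fun_prop) fun r (hr : 0 ≤ r) => ?_) x
    positivity

theorem tendsto_div_add_const_atTop (x y : ℝ) :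
    Filter.Tendsto (fun r => x / r + y) Filter.atTop (nhds y) := by
  simpa using
    ((tendsto_const_nhds (x := x)).div_atTop (Filter.tendsto_id (α := ℝ))).add_const y

theorem tendsto_log_add_mul_sub_log (x : ℝ) {y : ℝ} (hy : 0 < y) :
    Filter.Tendsto (fun r => Real.log (x + r * y) - Real.log r) Filter.atTop
      (nhds (Real.log y)) := by
  refine ((tendsto_div_add_const_atTop x y).log hy.ne').congr' ?_
  filter_upwards [Filter.eventually_gt_atTop 0,
    (tendsto_div_add_const_atTop x y).eventually_ne hy.ne'] with r hr hne
  have hsplit : x + r * y = r * (x / r + y) := by field_simp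
  rw [hsplit, Real.log_mul hr.ne' hne, add_sub_cancel_left]

theorem tendsto_mul_resolvent (x : ℝ) {y : ℝ} (hy : 0 < y) :
    Filter.Tendsto (fun r => r * (x * y / (x + r * y))) Filter.atTop (nhds x) := by
  have hlim := (tendsto_const_nhds (x := x * y)).div (tendsto_div_add_const_atTop x y) hy.ne'
  rw [mul_div_cancel_right₀ x hy.ne'] at hlim
  refine hlim.congr' ?_
  filter_upwards [Filter.eventually_gt_atTop 0] with r hr
  have hsplit : x + r * y = r * (x / r + y) := by field_simp
  rw [hsplit, Pi.div_apply, mul_div_assoc', mul_div_mul_left _ _ hr.ne']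

theorem mul_eq_zero_of_resolvent {ι : Type*} [Fintype ι] {w x y : ι → ℝ}
    (hx : ∀ i, 0 ≤ x i) (hy : ∀ i, 0 ≤ y i) (hw : ∀ i, y i = 0 → 0 ≤ w i)
    (hsum : ∑ i, w i * x i = 0)
    (hres : ∀ r, 0 < r → 0 ≤ ∑ i, w i * (x i * y i / (x i + r * y i)))
    {i : ι} (hi : y i = 0) : w i * x i = 0 := by
  have hlim : Filter.Tendsto (fun r => ∑ i, w i * (r * (x i * y i / (x i + r * y i))))
      Filter.atTop (nhds (∑ i, w i * if y i = 0 then 0 else x i)) := by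
    refine tendsto_finsetSum _ fun i _ => Filter.Tendsto.const_mul (w i) ?_
    split_ifs with hyi
    · simp only [hyi, mul_zero, zero_div, tendsto_const_nhds]
    · exact tendsto_mul_resolvent (x i) ((hy i).lt_of_ne' hyi)
  have hpos : 0 ≤ ∑ i, w i * if y i = 0 then 0 else x i := by
    refine ge_of_tendsto hlim ?_
    filter_upwards [Filter.eventually_gt_atTop 0] with r hr
    simpa only [mul_left_comm, ← Finset.mul_sum] using mul_nonneg hr.le (hres r hr)
  have hsplit : (∑ i, w i * if y i = 0 then x i else 0) =
      ∑ i, w i * x i - ∑ i, w i * if y i = 0 then 0 else x i := by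
    rw [← Finset.sum_sub_distrib]
    exact Finset.sum_congr rfl fun i _ => by split_ifs <;> ring
  have hnonneg (i : ι) : 0 ≤ w i * if y i = 0 then x i else 0 := by
    split_ifs with hyi
    · exact mul_nonneg (hw i hyi) (hx i)
    · rw [mul_zero]
  have hle := Finset.single_le_sum (fun i _ => hnonneg i) (Finset.mem_univ i)
  rw [hsplit, hsum, if_pos hi] at hle
  exact le_antisymm (by linarith) (mul_nonneg (hw i hi) (hx i))

/-- Integrate the resolvent inequality: `r ↦ ∑ w x log (x + r y)` is monotone, starts at the
left-hand side and tends to the right-hand side. -/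
theorem sum_mul_log_le_sum_mul_log_of_resolvent {ι : Type*} [Fintype ι] {w x y : ι → ℝ}
    (hx : ∀ i, 0 ≤ x i) (hy : ∀ i, 0 ≤ y i) (hw : ∀ i, y i = 0 → 0 ≤ w i)
    (hsum : ∑ i, w i * x i = 0)
    (hres : ∀ r, 0 < r → 0 ≤ ∑ i, w i * (x i * y i / (x i + r * y i))) :
    ∑ i, w i * (x i * Real.log (x i)) ≤ ∑ i, w i * (x i * Real.log (y i)) := by
  let h : ℝ → ℝ := fun r => ∑ i, w i * (x i * Real.log (x i + r * y i))
  have hderiv (r : ℝ) (hr : 0 < r) :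
      HasDerivAt h (∑ i, w i * (x i * y i / (x i + r * y i))) r :=
    HasDerivAt.fun_sum fun i _ => (hasDerivAt_mul_log_add_mul (hx i) (hy i) hr).const_mul (w i)
  have hmono : MonotoneOn h (Set.Ici 0) := by
    refine monotoneOn_of_deriv_nonneg (convex_Ici 0)
      (continuousOn_finsetSum _ fun i _ =>
        (continuousOn_mul_log_add_mul (hx i) (hy i)).const_mul (w i)) ?_ ?_ <;>
      rw [interior_Ici] <;> intro r (hr : 0 < r)
    · exact (hderiv r hr).differentiableAt.differentiableWithinAt
    · exact (hderiv r hr).deriv.symm ▸ hres r hr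
  have hlim : Filter.Tendsto h Filter.atTop (nhds (∑ i, w i * (x i * Real.log (y i)))) := by
    have hterm (i : ι) : Filter.Tendsto
        (fun r => w i * x i * (Real.log (x i + r * y i) - Real.log r)) Filter.atTop
        (nhds (w i * x i * Real.log (y i))) := by
      rcases (hy i).eq_or_lt' with hyi | hyi
      · simpa only [mul_eq_zero_of_resolvent hx hy hw hsum hres hyi, zero_mul] using
          tendsto_const_nhds
      · exact (tendsto_log_add_mul_sub_log (x i) hyi).const_mul _
    have hcancel (r : ℝ) :
        h r = ∑ i, w i * x i * (Real.log (x i + r * y i) - Real.log r) := by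
      simp only [h, mul_sub, Finset.sum_sub_distrib, ← Finset.sum_mul, hsum, zero_mul, sub_zero,
        ← mul_assoc]
    rw [funext hcancel]
    simpa only [mul_assoc] using tendsto_finsetSum Finset.univ fun i _ => hterm i
  have hzero : h 0 = ∑ i, w i * (x i * Real.log (x i)) := by simp only [h, zero_mul, add_zero]
  rw [← hzero]
  refine ge_of_tendsto hlim ?_
  filter_upwards [Filter.eventually_ge_atTop 0] with r hr
  exact hmono Set.self_mem_Ici hr hr

end ScalarInequality

section RelativeEntropy

variable {ι : Type*} [Fintype ι] [DecidableEq ι]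

theorem trace_diagonal_mul_mul_diagonal_mul_conjTranspose (s t : ι → ℝ) (W : Matrix ι ι ℂ) :
    (diagonal (fun i => (s i : ℂ)) * W * diagonal (fun j => (t j : ℂ)) * Wᴴ).trace.re =
      ∑ i, ∑ j, Complex.normSq (W i j) * (s i * t j) := by
  have hterm (i j : ι) : (s i : ℂ) * W i j * t j * star (W i j) =
      ((Complex.normSq (W i j) * (s i * t j) : ℝ) : ℂ) := by
    push_cast
    rw [← Complex.mul_conj, Complex.star_def]
    ring
  simp only [trace, diag_apply, mul_apply (N := Wᴴ), mul_diagonal, diagonal_mul,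
    conjTranspose_apply, hterm, ← Complex.ofReal_sum, Complex.ofReal_re]

/-- The squared overlaps `|⟨u_i, v_j⟩|²` of the eigenvectors `u_i` of `A` with the eigenvectors
`v_j` of `B`. -/
def eigenOverlap {A B : Matrix ι ι ℂ} (hA : A.IsHermitian) (hB : B.IsHermitian) (i j : ι) : ℝ :=
  Complex.normSq (((hA.eigenvectorUnitary : Matrix ι ι ℂ)ᴴ * hB.eigenvectorUnitary) i j)

theorem cfc_eq_conj_diagonal {A : Matrix ι ι ℂ} (hA : A.IsHermitian) (f : ℝ → ℝ) :
    cfc f A = (hA.eigenvectorUnitary : Matrix ι ι ℂ) *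
      diagonal (fun i => (f (hA.eigenvalues i) : ℂ)) *
        (hA.eigenvectorUnitary : Matrix ι ι ℂ)ᴴ := by
  rw [hA.cfc_eq, IsHermitian.cfc, Unitary.conjStarAlgAut_apply]
  rfl

theorem trace_cfc_mul_cfc {A B : Matrix ι ι ℂ} (hA : A.IsHermitian) (hB : B.IsHermitian)
    (f g : ℝ → ℝ) :
    (cfc f A * cfc g B).trace.re =
      ∑ i, ∑ j, eigenOverlap hA hB i j * (f (hA.eigenvalues i) * g (hB.eigenvalues j)) := by
  simp only [eigenOverlap]
  rw [← trace_diagonal_mul_mul_diagonal_mul_conjTranspose (fun i => f (hA.eigenvalues i))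
    (fun j => g (hB.eigenvalues j)), cfc_eq_conj_diagonal hA, cfc_eq_conj_diagonal hB]
  simp only [conjTranspose_mul, conjTranspose_conjTranspose, mul_assoc]
  rw [trace_mul_comm]
  simp only [mul_assoc]

theorem continuousOn_spectrum (f : ℝ → ℝ) (A : Matrix ι ι ℂ) : ContinuousOn f (spectrum ℝ A) :=
  A.finite_real_spectrum.continuousOn f

theorem mul_cfc_self {A : Matrix ι ι ℂ} (hA : A.IsHermitian) (f : ℝ → ℝ) :
    A * cfc f A = cfc (fun x => x * f x) A := by
  rw [cfc_mul (fun x => x) f A (continuousOn_spectrum _ _) (continuousOn_spectrum _ _),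
    cfc_id' ℝ A hA.isSelfAdjoint]

/-- The quantum relative entropy `tr σ (log σ − log τ)`, in nats. It is meaningful when the kernel
of `τ` is contained in that of `σ`; otherwise the convention `log 0 = 0` yields a junk value where
the usual definition has `+∞`. -/
def relEntropy (σ τ : Matrix ι ι ℂ) : ℝ :=
  (σ * (cfc Real.log σ - cfc Real.log τ)).trace.re

theorem relEntropy_eq_sum_eigenOverlap {σ τ : Matrix ι ι ℂ} (hσ : σ.IsHermitian)
    (hτ : τ.IsHermitian) :
    relEntropy σ τ =
      ∑ i, ∑ j, eigenOverlap hσ hτ i j * (hσ.eigenvalues i * Real.log (hσ.eigenvalues i)) -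
      ∑ i, ∑ j, eigenOverlap hσ hτ i j * (hσ.eigenvalues i * Real.log (hτ.eigenvalues j)) := by
  have hentropy := trace_cfc_mul_cfc hσ hτ (fun x => x * Real.log x) fun _ => 1
  have hcross := trace_cfc_mul_cfc hσ hτ (fun x => x) Real.log
  rw [cfc_const_one ℝ τ hτ.isSelfAdjoint, mul_one, ← mul_cfc_self hσ] at hentropy
  rw [cfc_id' ℝ σ hσ.isSelfAdjoint] at hcross
  rw [relEntropy, mul_sub, trace_sub, Complex.sub_re, hentropy, hcross]
  simp only [mul_one]

/-- The quadratic form `Z ↦ tr Z* σ Z + tr (1 - Z) τ (1 - Z)*`. For positive `σ` and `τ` its infimum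
over `Z` is the trace form of the parallel sum of left multiplication by `σ` and right
multiplication by `τ`; the parallel sum is therefore superadditive. -/
def parallelForm (σ τ Z : Matrix ι ι ℂ) : ℝ :=
  (Zᴴ * σ * Z).trace.re + ((1 - Z) * τ * (1 - Z)ᴴ).trace.re

theorem parallelForm_sum {κ : Type*} [Fintype κ] (σ τ : κ → Matrix ι ι ℂ) (Z : Matrix ι ι ℂ) :
    parallelForm (∑ k, σ k) (∑ k, τ k) Z = ∑ k, parallelForm (σ k) (τ k) Z := by
  simp only [parallelForm, Finset.mul_sum, Finset.sum_mul, trace_sum, Complex.re_sum,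
    Finset.sum_add_distrib]

theorem le_parallelForm_smul {T : Matrix ι ι ℂ} (hT : T.PosSemidef) {a b : ℝ} (ha : 0 ≤ a)
    (hb : 0 < b) (Z : Matrix ι ι ℂ) :
    a * b / (a + b) * T.trace.re ≤ parallelForm (a • T) (b • T) Z := by
  have hab : a + b ≠ 0 := by positivity
  let p : ℝ := b / (a + b)
  let W := Z - p • (1 : Matrix ι ι ℂ)
  have hleft : 0 ≤ a * (Wᴴ * T * W).trace.re :=
    mul_nonneg ha (Complex.nonneg_iff.1 (hT.conjTranspose_mul_mul_same W).trace_nonneg).1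
  have hright : 0 ≤ b * (W * T * Wᴴ).trace.re :=
    mul_nonneg hb.le (Complex.nonneg_iff.1 (hT.mul_mul_conjTranspose_same W).trace_nonneg).1
  have hsquare : parallelForm (a • T) (b • T) Z =
      a * b / (a + b) * T.trace.re + a * (Wᴴ * T * W).trace.re +
        b * (W * T * Wᴴ).trace.re := by
    have hZ : Z = W + p • (1 : Matrix ι ι ℂ) := (sub_add_cancel _ _).symm
    have hcomm : (T * W).trace = (W * T).trace := trace_mul_comm T W
    have hcomm' : (T * Wᴴ).trace = (Wᴴ * T).trace := trace_mul_comm T Wᴴ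
    have hp : a * p = b * (1 - p) := by simp only [p]; field_simp; ring
    have hq : a * b / (a + b) = a * p := by simp only [p]; ring
    rw [hq, parallelForm, hZ]
    simp only [conjTranspose_add, conjTranspose_sub, conjTranspose_smul, conjTranspose_one,
      star_trivial, mul_add, add_mul, mul_sub, sub_mul, mul_one, one_mul, mul_smul_comm,
      smul_mul_assoc, smul_add, smul_sub, trace_add, trace_sub, trace_smul, hcomm, hcomm',
      Complex.add_re, Complex.sub_re, Complex.smul_re, smul_eq_mul]
    linear_combination ((W * T).trace.re + (Wᴴ * T).trace.re - (1 - p) * T.trace.re) * hp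
  linarith

theorem parallelForm_conj_diagonal {U V : Matrix ι ι ℂ} (hU : U ∈ unitaryGroup ι ℂ)
    (hV : V ∈ unitaryGroup ι ℂ) (s t : ι → ℝ) (z : Matrix ι ι ℂ) :
    parallelForm (U * diagonal (fun i => (s i : ℂ)) * Uᴴ)
        (V * diagonal (fun j => (t j : ℂ)) * Vᴴ)
        (U * z * Vᴴ) =
      ∑ i, ∑ j, (Complex.normSq (z i j) * s i +
        Complex.normSq ((Uᴴ * V - z) i j) * t j) := by
  have hUU : Uᴴ * U = 1 := hU.1
  have hVV : Vᴴ * V = 1 := hV.1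
  have hcompl : 1 - U * z * Vᴴ = U * (Uᴴ * V - z) * Vᴴ := by
    rw [mul_sub, sub_mul, ← mul_assoc, ← star_eq_conjTranspose U, hU.2, one_mul,
      ← star_eq_conjTranspose V, hV.2]
  have hleft (S : Matrix ι ι ℂ) :
      ((U * z * Vᴴ)ᴴ * (U * S * Uᴴ) * (U * z * Vᴴ)).trace = (S * z * zᴴ).trace := by
    calc _ = (V * (zᴴ * (Uᴴ * U) * S * (Uᴴ * U) * z) * Vᴴ).trace := by
          simp only [conjTranspose_mul, conjTranspose_conjTranspose, mul_assoc]
      _ = (zᴴ * (S * z)).trace := by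
          rw [trace_mul_cycle, hVV, hUU, one_mul, mul_one, mul_one, mul_assoc]
      _ = _ := trace_mul_comm _ _
  have hright (W T : Matrix ι ι ℂ) :
      ((U * W * Vᴴ) * (V * T * Vᴴ) * (U * W * Vᴴ)ᴴ).trace = (W * T * Wᴴ).trace := by
    calc _ = (U * (W * (Vᴴ * V) * T * (Vᴴ * V) * Wᴴ) * Uᴴ).trace := by
          simp only [conjTranspose_mul, conjTranspose_conjTranspose, mul_assoc]
      _ = _ := by rw [trace_mul_cycle, hUU, hVV, one_mul, mul_one, mul_one]
  have hsumleft := trace_diagonal_mul_mul_diagonal_mul_conjTranspose s (fun _ => 1) z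
  have hsumright :=
    trace_diagonal_mul_mul_diagonal_mul_conjTranspose (fun _ => 1) t (Uᴴ * V - z)
  simp only [Complex.ofReal_one, diagonal_one, mul_one, one_mul] at hsumleft hsumright
  rw [parallelForm, hcompl, hleft, hright, hsumleft, hsumright]
  simp only [Finset.sum_add_distrib]

theorem exists_parallelForm_eq {U V : Matrix ι ι ℂ} (hU : U ∈ unitaryGroup ι ℂ)
    (hV : V ∈ unitaryGroup ι ℂ) {s t : ι → ℝ} (hs : ∀ i, 0 ≤ s i)
    (ht : ∀ j, 0 ≤ t j) :
    ∃ Z, parallelForm (U * diagonal (fun i => (s i : ℂ)) * Uᴴ)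
        (V * diagonal (fun j => (t j : ℂ)) * Vᴴ) Z =
      ∑ i, ∑ j, Complex.normSq ((Uᴴ * V) i j) * (s i * t j / (s i + t j)) := by
  let p (i j : ι) : ℝ := t j / (s i + t j)
  refine ⟨_, (parallelForm_conj_diagonal hU hV s t
    (of fun i j => (p i j : ℂ) * (Uᴴ * V) i j)).trans ?_⟩
  refine Finset.sum_congr rfl fun i _ => Finset.sum_congr rfl fun j _ => ?_
  generalize Uᴴ * V = O
  have hentry : (O - of fun i j => (p i j : ℂ) * O i j) i j = ((1 - p i j : ℝ) : ℂ) * O i j := by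
    rw [Matrix.sub_apply, of_apply]
    push_cast
    ring
  have hscalar : p i j * p i j * s i + (1 - p i j) * (1 - p i j) * t j =
      s i * t j / (s i + t j) := by
    rcases (add_nonneg (hs i) (ht j)).eq_or_lt' with hzero | hpos
    · obtain ⟨hsi, htj⟩ := (add_eq_zero_iff_of_nonneg (hs i) (ht j)).1 hzero
      simp only [p, hsi, htj, mul_zero, zero_div, add_zero]
    · simp only [p]
      field_simp
      ring
  rw [hentry, of_apply, Complex.normSq_mul, Complex.normSq_mul, Complex.normSq_ofReal,
    Complex.normSq_ofReal, ← hscalar]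
  ring

theorem sum_resolvent_trace_le {κ : Type*} [Fintype κ] {T : κ → Matrix ι ι ℂ}
    (hT : ∀ k, (T k).PosSemidef) {a : κ → ℝ} (ha : ∀ k, 0 ≤ a k)
    (hσ : (∑ k, a k • T k).PosSemidef) (hτ : (∑ k, T k).PosSemidef) {r : ℝ} (hr : 0 < r) :
    ∑ k, (T k).trace.re * (a k / (a k + r)) ≤
      ∑ i, ∑ j, eigenOverlap hσ.1 hτ.1 i j * (hσ.1.eigenvalues i * hτ.1.eigenvalues j /
        (hσ.1.eigenvalues i + r * hτ.1.eigenvalues j)) := by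
  obtain ⟨Z, hZ⟩ := exists_parallelForm_eq hσ.1.eigenvectorUnitary.2 hτ.1.eigenvectorUnitary.2
    hσ.eigenvalues_nonneg fun j => mul_nonneg hr.le (hτ.eigenvalues_nonneg j)
  rw [← cfc_eq_conj_diagonal hσ.1 fun x => x, ← cfc_eq_conj_diagonal hτ.1 fun x => r * x,
    cfc_id' ℝ _ hσ.1.isSelfAdjoint, cfc_const_mul_id r _ hτ.1.isSelfAdjoint, Finset.smul_sum,
    parallelForm_sum] at hZ
  refine le_of_mul_le_mul_left ?_ hr
  calc _ = ∑ k, a k * r / (a k + r) * (T k).trace.re := by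
        rw [Finset.mul_sum]
        exact Finset.sum_congr rfl fun k _ => by ring
    _ ≤ _ := Finset.sum_le_sum fun k _ => le_parallelForm_smul (hT k) (ha k) hr Z
    _ = _ := by
        rw [hZ]
        simp only [eigenOverlap, Finset.mul_sum]
        exact Finset.sum_congr rfl fun i _ => Finset.sum_congr rfl fun j _ => by ring

theorem relEntropy_sum_smul_le {κ : Type*} [Fintype κ] {T : κ → Matrix ι ι ℂ}
    (hT : ∀ k, (T k).PosSemidef) {a : κ → ℝ} (ha : ∀ k, 0 ≤ a k) :
    relEntropy (∑ k, a k • T k) (∑ k, T k) ≤ ∑ k, a k * Real.log (a k) * (T k).trace.re := by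
  have hσ : (∑ k, a k • T k).PosSemidef :=
    posSemidef_sum Finset.univ fun k _ => (hT k).smul (ha k)
  have hτ : (∑ k, T k).PosSemidef := posSemidef_sum Finset.univ fun k _ => hT k
  have htrace : ∑ i, ∑ j, eigenOverlap hσ.1 hτ.1 i j * hσ.1.eigenvalues i =
      ∑ k, (T k).trace.re * a k := by
    have h := trace_cfc_mul_cfc hσ.1 hτ.1 (fun x => x) fun _ => 1
    rw [cfc_id' ℝ _ hσ.1.isSelfAdjoint, cfc_const_one ℝ _ hτ.1.isSelfAdjoint] at h
    simpa only [mul_one, mul_comm (a _), trace_sum, trace_smul, Complex.re_sum, Complex.smul_re,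
      smul_eq_mul] using h.symm
  have hlog := sum_mul_log_le_sum_mul_log_of_resolvent
    (w := Sum.elim (fun ij : ι × ι => eigenOverlap hσ.1 hτ.1 ij.1 ij.2)
      fun k => -(T k).trace.re)
    (x := Sum.elim (fun ij => hσ.1.eigenvalues ij.1) a)
    (y := Sum.elim (fun ij => hτ.1.eigenvalues ij.2) fun _ => 1)
    (by rintro (ij | k); exacts [hσ.eigenvalues_nonneg _, ha k])
    (by rintro (ij | _); exacts [hτ.eigenvalues_nonneg _, zero_le_one])
    (by rintro (ij | _) h; exacts [Complex.normSq_nonneg _, absurd h one_ne_zero])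
    (by simp [Fintype.sum_prod_type, htrace])
    (fun r hr => by
      simpa [Fintype.sum_prod_type] using sum_resolvent_trace_le hT ha hσ hτ hr)
  rw [relEntropy_eq_sum_eigenOverlap hσ.1 hτ.1, sub_le_iff_le_add']
  simpa [Fintype.sum_prod_type, mul_comm (T _).trace.re] using hlog

end RelativeEntropy

section Entropy

variable {ι : Type*} [Fintype ι] [DecidableEq ι]

theorem trace_cfc {A : Matrix ι ι ℂ} (hA : A.IsHermitian) (f : ℝ → ℝ) :
    (cfc f A).trace.re = ∑ i, f (hA.eigenvalues i) := by
  rw [cfc_eq_conj_diagonal hA, trace_mul_cycle, ← star_eq_conjTranspose,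
    Unitary.coe_star_mul_self, one_mul, trace_diagonal, Complex.re_sum]
  simp only [Complex.ofReal_re]

theorem entropy2_eq_trace_cfc_negMulLog {A : Matrix ι ι ℂ} (hA : A.IsHermitian) :
    entropy2 A = (cfc Real.negMulLog A).trace.re / Real.log 2 := by
  rw [entropy2, dif_pos hA, trace_cfc hA, Finset.sum_div, ← Finset.sum_neg_distrib]
  refine Finset.sum_congr rfl fun i _ => ?_
  rw [Real.negMulLog, Real.logb]
  ring

theorem entropy2_le_logb_card [Nonempty ι] {A : Matrix ι ι ℂ} (hA : A.PosSemidef)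
    (htr : A.trace = 1) : entropy2 A ≤ Real.logb 2 (Fintype.card ι) := by
  have hcard : (0 : ℝ) < Fintype.card ι := Nat.cast_pos.2 Fintype.card_pos
  have hsum : ∑ i, hA.1.eigenvalues i = 1 := by
    simpa [htr] using (congrArg Complex.re hA.1.trace_eq_sum_eigenvalues).symm
  have hjensen := Real.concaveOn_negMulLog.le_map_sum (t := Finset.univ)
    (w := fun _ : ι => (Fintype.card ι : ℝ)⁻¹) (fun _ _ => by positivity)
    (by simp [hcard.ne']) fun i _ => hA.eigenvalues_nonneg i
  simp only [smul_eq_mul, ← Finset.mul_sum, hsum, mul_one] at hjensen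
  rw [entropy2_eq_trace_cfc_negMulLog hA.1, trace_cfc hA.1, Real.logb]
  gcongr
  rw [inv_mul_le_iff₀ hcard] at hjensen
  simpa [Real.negMulLog, hcard.ne'] using hjensen

theorem cfc_affine {A : Matrix ι ι ℂ} (hA : A.IsHermitian) (a b : ℝ) :
    cfc (fun x => a * x + b * (1 - x)) A = a • A + b • (1 - A) := by
  have hsa : IsSelfAdjoint A := hA
  have hsub : cfc (fun x : ℝ => 1 - x) A = 1 - A := by
    rw [cfc_sub (fun _ => (1 : ℝ)) (fun x => x) A, cfc_const_one ℝ A hsa, cfc_id' ℝ A hsa]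
  rw [cfc_add A (fun x => a * x) fun x => b * (1 - x), cfc_const_mul_id a A hsa,
    cfc_const_mul b (fun x => 1 - x) A, hsub]

theorem cfc_smul_add_smul_of_isStarProjection {P : Matrix ι ι ℂ} (hP : IsStarProjection P)
    (f : ℝ → ℝ) (a b : ℝ) : cfc f (a • P + b • (1 - P)) = f a • P + f b • (1 - P) := by
  have hherm : P.IsHermitian := hP.isSelfAdjoint
  have hspec : spectrum ℝ P ⊆ {0, 1} :=
    (isStarProjection_iff_spectrum_subset_and_isSelfAdjoint.1 hP).1
  have haffine : Set.EqOn (fun x => f (a * x + b * (1 - x)))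
      (fun x => f a * x + f b * (1 - x)) (spectrum ℝ P) := by
    intro x hx
    rcases hspec hx with rfl | rfl <;> simp
  rw [← cfc_affine hherm a b, ← cfc_comp' f (fun x => a * x + b * (1 - x)) P
    ((finite_real_spectrum.image _).continuousOn f), cfc_congr haffine, cfc_affine hherm]

theorem entropy2_smul_add_smul_of_isStarProjection {P : Matrix ι ι ℂ} (hP : IsStarProjection P)
    (a b : ℝ) :
    entropy2 (a • P + b • (1 - P)) = -(P.trace.re * (a * Real.logb 2 a) +
      (Fintype.card ι - P.trace.re) * (b * Real.logb 2 b)) := by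
  have hherm : (a • P + b • (1 - P)).IsHermitian := by
    rw [← cfc_affine hP.isSelfAdjoint]
    exact cfc_predicate _ P
  rw [entropy2_eq_trace_cfc_negMulLog hherm, cfc_smul_add_smul_of_isStarProjection hP]
  simp only [Real.negMulLog, Real.logb, trace_add, trace_smul, trace_sub, trace_one,
    Complex.add_re, Complex.smul_re, Complex.sub_re, Complex.natCast_re, smul_eq_mul]
  ring

theorem entropy2_inv_card_smul_one [Nonempty ι] :
    entropy2 ((Fintype.card ι : ℝ)⁻¹ • (1 : Matrix ι ι ℂ)) = Real.logb 2 (Fintype.card ι) := by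
  have hcard : (Fintype.card ι : ℝ) ≠ 0 := Nat.cast_ne_zero.2 Fintype.card_ne_zero
  have h := entropy2_smul_add_smul_of_isStarProjection (.one (Matrix ι ι ℂ))
    (Fintype.card ι : ℝ)⁻¹ 0
  simpa [Real.logb_inv, hcard] using h

end Entropy

section PartialTrace

variable {ι κ : Type*}

theorem posSemidef_ptrace2 [Fintype κ] {X : Matrix (ι × κ) (ι × κ) ℂ} (hX : X.PosSemidef) :
    (ptrace2 X).PosSemidef := by
  have hsum : ptrace2 X = ∑ j, X.submatrix (fun a => (a, j)) fun a => (a, j) := by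
    ext a b
    simp only [ptrace2, Matrix.sum_apply, submatrix_apply]
  rw [hsum]
  exact posSemidef_sum Finset.univ fun j _ => hX.submatrix _

theorem posSemidef_ptrace1 [Fintype ι] {X : Matrix (ι × κ) (ι × κ) ℂ} (hX : X.PosSemidef) :
    (ptrace1 X).PosSemidef := by
  have hsum : ptrace1 X = ∑ a, X.submatrix (fun j => (a, j)) fun j => (a, j) := by
    ext u v
    simp only [ptrace1, Matrix.sum_apply, submatrix_apply]
  rw [hsum]
  exact posSemidef_sum Finset.univ fun j _ => hX.submatrix _

theorem trace_ptrace1 [Fintype ι] [Fintype κ] (X : Matrix (ι × κ) (ι × κ) ℂ) :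
    (ptrace1 X).trace = X.trace := by
  simp only [trace, ptrace1, diag_apply, Fintype.sum_prod_type_right]

theorem trace_ptrace2 [Fintype ι] [Fintype κ] (X : Matrix (ι × κ) (ι × κ) ℂ) :
    (ptrace2 X).trace = X.trace := by
  simp only [trace, ptrace2, diag_apply, Fintype.sum_prod_type]

theorem ptrace2_add [Fintype κ] (X Y : Matrix (ι × κ) (ι × κ) ℂ) :
    ptrace2 (X + Y) = ptrace2 X + ptrace2 Y := by
  ext a b
  simp only [ptrace2, Matrix.add_apply, Finset.sum_add_distrib]

theorem ptrace2_smul [Fintype κ] (c : ℝ) (X : Matrix (ι × κ) (ι × κ) ℂ) :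
    ptrace2 (c • X) = c • ptrace2 X := by
  ext a b
  simp only [ptrace2, Matrix.smul_apply, Finset.smul_sum]

theorem ptrace2_kronecker_one [Fintype κ] [DecidableEq κ] (A : Matrix ι ι ℂ) :
    ptrace2 (A ⊗ₖ (1 : Matrix κ κ ℂ)) = (Fintype.card κ : ℝ) • A := by
  ext a b
  simp [ptrace2, mul_comm]

theorem trace_mul_kronecker_one [Fintype ι] [Fintype κ] [DecidableEq κ]
    (X : Matrix (ι × κ) (ι × κ) ℂ) (M : Matrix ι ι ℂ) :
    (X * (M ⊗ₖ (1 : Matrix κ κ ℂ))).trace = (ptrace2 X * M).trace := by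
  simp only [trace, diag_apply, mul_apply, kroneckerMap_apply, one_apply, mul_ite, mul_one,
    mul_zero, Fintype.sum_prod_type, Finset.sum_ite_eq', Finset.mem_univ, if_true, ptrace2,
    Finset.sum_mul]
  exact Finset.sum_congr rfl fun _ _ => Finset.sum_comm

end PartialTrace

section Bipartite

variable {ι κ : Type*} [Fintype ι] [DecidableEq ι] [Fintype κ] [DecidableEq κ]

/-- The ampliation `A ↦ A ⊗ 1` as a star-algebra homomorphism, so that the functional calculus can
be transported along it. -/
def kroneckerOneHom (ι κ : Type*) [Fintype ι] [DecidableEq ι] [Fintype κ] [DecidableEq κ] :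
    Matrix ι ι ℂ →⋆ₐ[ℝ] Matrix (ι × κ) (ι × κ) ℂ where
  toFun A := A ⊗ₖ (1 : Matrix κ κ ℂ)
  map_one' := one_kronecker_one
  map_mul' A B := by rw [← mul_kronecker_mul, one_mul]
  map_zero' := zero_kronecker _
  map_add' A B := add_kronecker A B _
  commutes' r := by
    rw [Algebra.algebraMap_eq_smul_one, Algebra.algebraMap_eq_smul_one, smul_kronecker,
      one_kronecker_one]
  map_star' A := by
    rw [star_eq_conjTranspose, star_eq_conjTranspose, conjTranspose_kronecker, conjTranspose_one]

theorem cfc_kronecker_one {A : Matrix ι ι ℂ} (hA : A.IsHermitian) (f : ℝ → ℝ) :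
    cfc f (A ⊗ₖ (1 : Matrix κ κ ℂ)) = cfc f A ⊗ₖ (1 : Matrix κ κ ℂ) := by
  have hsa : IsSelfAdjoint A := hA
  exact ((kroneckerOneHom ι κ).map_cfc f A (continuousOn_spectrum f A)
    (LinearMap.continuous_of_finiteDimensional (kroneckerOneHom ι κ).toLinearMap) hsa
    (hsa.map (kroneckerOneHom ι κ))).symm

theorem relEntropy_smul_ptrace2_kronecker_one {Y : Matrix (ι × κ) (ι × κ) ℂ} (hY : Y.PosSemidef)
    {c : ℝ} (hc : c ≠ 0) :
    relEntropy Y (c • (ptrace2 Y ⊗ₖ (1 : Matrix κ κ ℂ))) =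
      Real.log 2 * (entropy2 (ptrace2 Y) - entropy2 Y) - Y.trace.re * Real.log c := by
  have hρ : (ptrace2 Y).IsHermitian := (posSemidef_ptrace2 hY).1
  have hlog2 : Real.log 2 ≠ 0 := (Real.log_pos one_lt_two).ne'
  have hself : (Y * cfc Real.log Y).trace.re = -(Real.log 2 * entropy2 Y) := by
    rw [mul_cfc_self hY.1, entropy2_eq_trace_cfc_negMulLog hY.1, mul_div_cancel₀ _ hlog2,
      trace_cfc hY.1, trace_cfc hY.1, ← Finset.sum_neg_distrib]
    simp only [Real.negMulLog, neg_mul, neg_neg]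
  have hcross : (Y * cfc Real.log (c • (ptrace2 Y ⊗ₖ (1 : Matrix κ κ ℂ)))).trace.re =
      Y.trace.re * Real.log c - Real.log 2 * entropy2 (ptrace2 Y) := by
    have hscale (x : ℝ) : x * Real.log (c * x) = x * Real.log c - Real.negMulLog x := by
      rcases eq_or_ne x 0 with rfl | hx
      · simp only [zero_mul, Real.negMulLog_zero, sub_zero]
      · rw [Real.log_mul hc hx, Real.negMulLog]
        ring
    rw [← smul_kronecker, cfc_kronecker_one ((IsSelfAdjoint.all c).smul hρ.isSelfAdjoint),
      trace_mul_kronecker_one,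
      ← cfc_comp_const_mul c Real.log _ ((finite_real_spectrum.image _).continuousOn _),
      mul_cfc_self hρ, entropy2_eq_trace_cfc_negMulLog hρ, mul_div_cancel₀ _ hlog2,
      trace_cfc hρ, trace_cfc hρ, ← trace_ptrace2 Y]
    simp only [hscale, Finset.sum_sub_distrib, ← Finset.sum_mul, hρ.trace_eq_sum_eigenvalues,
      Complex.re_sum, Complex.coe_algebraMap, Complex.ofReal_re]
  rw [relEntropy, mul_sub, trace_sub, Complex.sub_re, hself, hcross]
  ring

end Bipartite

section OperatorBound

theorem le_trace_smul_one {ι : Type*} [Fintype ι] [DecidableEq ι] {A : Matrix ι ι ℂ}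
    (hA : A.PosSemidef) : A ≤ A.trace.re • (1 : Matrix ι ι ℂ) := by
  rw [← Algebra.algebraMap_eq_smul_one]
  refine le_algebraMap_of_spectrum_le (fun x hx => ?_) hA.1
  obtain ⟨i, rfl⟩ := hA.1.spectrum_real_eq_range_eigenvalues ▸ hx
  have htrace : A.trace.re = ∑ i, hA.1.eigenvalues i := by
    simp [hA.1.trace_eq_sum_eigenvalues]
  rw [htrace]
  exact Finset.single_le_sum (fun i _ => hA.eigenvalues_nonneg i) (Finset.mem_univ i)

variable {ι κ : Type*} [Fintype ι] [Fintype κ] [DecidableEq κ]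

/-- Conjugating by `ρ^(-1/2) ⊗ 1`, where `ρ = ptrace2 X`, turns the reduced state into `1`, whose
trace is the dimension. -/
theorem le_card_smul_ptrace2_kronecker_one_of_posDef {X : Matrix (ι × κ) (ι × κ) ℂ}
    (hX : X.PosSemidef) (hρ : (ptrace2 X).PosDef) :
    X ≤ (Fintype.card ι : ℝ) • (ptrace2 X ⊗ₖ (1 : Matrix κ κ ℂ)) := by
  classical
  obtain ⟨B, hB, hρB⟩ :=
    CStarAlgebra.isStrictlyPositive_iff_eq_star_mul_self.1 hρ.isStrictlyPositive
  obtain ⟨C, hCB⟩ := hB.exists_left_inv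
  have hBC : B * C = 1 := mul_eq_one_comm.1 hCB
  let φ := kroneckerOneHom ι κ
  have htrace : (star (φ C) * X * φ C).trace = Fintype.card ι := by
    have hcancel : star B * B * (C * star C) = 1 := by
      rw [mul_assoc, ← mul_assoc B, hBC, one_mul, ← star_mul, hCB, star_one]
    calc _ = (X * φ (C * star C)).trace := by
          rw [trace_mul_cycle, trace_mul_comm, map_mul, map_star]
      _ = (ptrace2 X * (C * star C)).trace := trace_mul_kronecker_one X _
      _ = _ := by rw [hρB, hcancel, trace_one]
  have hwhite : star (φ C) * X * φ C ≤ (Fintype.card ι : ℝ) • 1 := by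
    have h := le_trace_smul_one (hX.conjTranspose_mul_mul_same (φ C))
    rwa [← star_eq_conjTranspose, htrace, Complex.natCast_re] at h
  have hinv : φ C * φ B = 1 := by rw [← map_mul, hCB, map_one]
  calc X = star (φ B) * (star (φ C) * X * φ C) * φ B := by
        rw [mul_assoc _ _ (φ C), mul_assoc, mul_assoc, mul_assoc, hinv, mul_one, ← mul_assoc,
          ← star_mul, hinv, star_one, one_mul]
    _ ≤ star (φ B) * ((Fintype.card ι : ℝ) • 1) * φ B :=
        star_left_conjugate_le_conjugate hwhite (φ B)
    _ = (Fintype.card ι : ℝ) • φ (ptrace2 X) := by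
        rw [mul_smul_comm, mul_one, smul_mul_assoc, ← map_star, ← map_mul, ← hρB]

open scoped Matrix.Norms.L2Operator in
theorem nonneg_of_forall_nonneg_add_smul {ι : Type*} [Finite ι] {A B : Matrix ι ι ℂ}
    (h : ∀ ε : ℝ, 0 < ε → 0 ≤ A + ε • B) : 0 ≤ A := by
  classical
  have := Fintype.ofFinite ι
  have hlim : Filter.Tendsto (fun ε : ℝ => A + ε • B) (nhdsWithin 0 (Set.Ioi 0)) (nhds A) := by
    have hcont : Continuous fun ε : ℝ => A + ε • B := by fun_prop
    simpa only [zero_smul, add_zero] using hcont.continuousWithinAt (x := 0).tendsto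
  exact ge_of_tendsto hlim (eventually_nhdsWithin_of_forall fun ε hε => h ε hε)

theorem le_card_smul_ptrace2_kronecker_one {X : Matrix (ι × κ) (ι × κ) ℂ} (hX : X.PosSemidef) :
    X ≤ (Fintype.card ι : ℝ) • (ptrace2 X ⊗ₖ (1 : Matrix κ κ ℂ)) := by
  classical
  cases isEmpty_or_nonempty κ
  · exact (Subsingleton.elim _ _).le
  rw [← sub_nonneg]
  refine nonneg_of_forall_nonneg_add_smul
    (B := ((Fintype.card ι : ℝ) * Fintype.card κ - 1) • 1) fun ε hε => ?_
  have hptrace : ptrace2 (X + ε • (1 : Matrix (ι × κ) (ι × κ) ℂ)) =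
      ptrace2 X + (ε * Fintype.card κ) • (1 : Matrix ι ι ℂ) := by
    rw [ptrace2_add, ptrace2_smul, ← one_kronecker_one, ptrace2_kronecker_one, smul_smul]
  have hpos : (ptrace2 (X + ε • (1 : Matrix (ι × κ) (ι × κ) ℂ))).PosDef := by
    rw [hptrace]
    exact .posSemidef_add (posSemidef_ptrace2 hX) (PosDef.one.smul (by positivity))
  have hle := le_card_smul_ptrace2_kronecker_one_of_posDef
    (hX.add (PosSemidef.one.smul hε.le)) hpos
  rw [← sub_nonneg, hptrace] at hle
  convert hle using 1
  rw [add_kronecker, smul_kronecker, one_kronecker_one]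
  module

end OperatorBound

section Depolarizing

variable {n d : ℕ} {lam : ℝ}

theorem idTensor_depol (X : Matrix (Fin d × Fin n) (Fin d × Fin n) ℂ) :
    idTensor d (depol n lam) X =
      lam • X + ((1 - lam) / n) • (ptrace2 X ⊗ₖ (1 : Matrix (Fin n) (Fin n) ℂ)) := by
  ext ⟨a, u⟩ ⟨b, v⟩
  simp only [idTensor, depol, ptrace2, Matrix.add_apply, Matrix.smul_apply, kroneckerMap_apply,
    trace, smul_eq_mul, Complex.real_smul]
  rfl

theorem ptrace1_idTensor_depol (X : Matrix (Fin d × Fin n) (Fin d × Fin n) ℂ) :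
    ptrace1 (idTensor d (depol n lam) X) = depol n lam (ptrace1 X) := by
  ext u v
  rw [idTensor_depol, depol, trace_ptrace1, ← trace_ptrace2]
  simp only [ptrace1, trace, diag_apply, Matrix.add_apply, Matrix.smul_apply, kroneckerMap_apply,
    Finset.sum_add_distrib, Complex.real_smul, smul_eq_mul, Finset.mul_sum, Finset.sum_mul]

theorem ptrace2_idTensor_depol [NeZero n] (X : Matrix (Fin d × Fin n) (Fin d × Fin n) ℂ) :
    ptrace2 (idTensor d (depol n lam) X) = ptrace2 X := by
  have hn : (n : ℝ) ≠ 0 := NeZero.ne _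
  rw [idTensor_depol, ptrace2_add, ptrace2_smul, ptrace2_smul, ptrace2_kronecker_one, smul_smul,
    Fintype.card_fin, div_mul_cancel₀ _ hn, ← add_smul, add_sub_cancel, one_smul]

theorem trace_idTensor_depol [NeZero n] (X : Matrix (Fin d × Fin n) (Fin d × Fin n) ℂ) :
    (idTensor d (depol n lam) X).trace = X.trace := by
  rw [← trace_ptrace2, ptrace2_idTensor_depol, trace_ptrace2]

theorem idTensor_depol_eq_smul_add_smul [NeZero d]
    (X : Matrix (Fin d × Fin n) (Fin d × Fin n) ℂ) :
    idTensor d (depol n lam) X = (lam + (1 - lam) / (n * d)) • X +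
      ((1 - lam) / (n * d)) • ((d : ℝ) • (ptrace2 X ⊗ₖ (1 : Matrix (Fin n) (Fin n) ℂ)) - X) := by
  have hd : (d : ℝ) ≠ 0 := NeZero.ne _
  have hscale : (1 - lam) / n = (1 - lam) / (n * d) * d := by
    rw [← div_div, div_mul_cancel₀ _ hd]
  rw [idTensor_depol, hscale]
  module

theorem posSemidef_card_smul_ptrace2_kronecker_one_sub
    {X : Matrix (Fin d × Fin n) (Fin d × Fin n) ℂ} (hX : X.PosSemidef) :
    ((d : ℝ) • (ptrace2 X ⊗ₖ (1 : Matrix (Fin n) (Fin n) ℂ)) - X).PosSemidef := by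
  simpa only [Fintype.card_fin, le_iff] using le_card_smul_ptrace2_kronecker_one hX

theorem posSemidef_idTensor_depol [NeZero d] (hlam : 0 ≤ lam + (1 - lam) / (n * d))
    (hlam1 : lam ≤ 1) {X : Matrix (Fin d × Fin n) (Fin d × Fin n) ℂ} (hX : X.PosSemidef) :
    (idTensor d (depol n lam) X).PosSemidef := by
  rw [idTensor_depol_eq_smul_add_smul]
  exact (hX.smul hlam).add ((posSemidef_card_smul_ptrace2_kronecker_one_sub hX).smul
    (div_nonneg (sub_nonneg.2 hlam1) (by positivity)))

/-- The largest entropy gain `S(tr₂ X) - S((id ⊗ D_λ) X)` of the depolarizing channel over the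
states `X` of a `d × n` system with `d ≤ n`. -/
def depolGain (d n : ℕ) (lam : ℝ) : ℝ :=
  Real.logb 2 d + (lam + (1 - lam) / (n * d)) * Real.logb 2 (lam + (1 - lam) / (n * d)) +
    (n * d - 1) * ((1 - lam) / (n * d)) * Real.logb 2 ((1 - lam) / (n * d))

theorem entropy2_ptrace2_sub_entropy2_idTensor_depol_le [NeZero d] [NeZero n]
    (hlam : 0 ≤ lam + (1 - lam) / (n * d)) (hlam1 : lam ≤ 1)
    {X : Matrix (Fin d × Fin n) (Fin d × Fin n) ℂ} (hX : X.PosSemidef) (htr : X.trace = 1) :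
    entropy2 (ptrace2 X) - entropy2 (idTensor d (depol n lam) X) ≤ depolGain d n lam := by
  have hlog2 : 0 < Real.log 2 := Real.log_pos one_lt_two
  let τ := (d : ℝ) • (ptrace2 X ⊗ₖ (1 : Matrix (Fin n) (Fin n) ℂ))
  have htrace : (τ - X).trace.re = n * d - 1 := by
    simp [τ, trace_kronecker, trace_ptrace2, htr, mul_comm]
  have hB : 0 ≤ (1 - lam) / (n * d) := div_nonneg (sub_nonneg.2 hlam1) (by positivity)
  have hsplit : idTensor d (depol n lam) X =
      (lam + (1 - lam) / (n * d)) • X + ((1 - lam) / (n * d)) • (τ - X) :=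
    idTensor_depol_eq_smul_add_smul X
  have hle : relEntropy (idTensor d (depol n lam) X) τ ≤
      (lam + (1 - lam) / (n * d)) * Real.log (lam + (1 - lam) / (n * d)) +
      (1 - lam) / (n * d) * Real.log ((1 - lam) / (n * d)) * (n * d - 1) := by
    rw [hsplit]
    simpa only [Fin.sum_univ_two, cons_val_zero, cons_val_one, add_sub_cancel, htr, htrace,
      Complex.one_re, mul_one] using relEntropy_sum_smul_le (T := ![X, τ - X])
      (Fin.forall_fin_two.2 ⟨hX, posSemidef_card_smul_ptrace2_kronecker_one_sub hX⟩)
      (a := ![lam + (1 - lam) / (n * d), (1 - lam) / (n * d)]) (Fin.forall_fin_two.2 ⟨hlam, hB⟩)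
  have hgain := relEntropy_smul_ptrace2_kronecker_one
    (posSemidef_idTensor_depol hlam hlam1 hX) (NeZero.ne (d : ℝ))
  rw [ptrace2_idTensor_depol, trace_idTensor_depol, htr, Complex.one_re, one_mul] at hgain
  refine le_of_mul_le_mul_left ?_ hlog2
  calc _ = relEntropy (idTensor d (depol n lam) X) τ + Real.log d := by
        rw [hgain, sub_add_cancel]
    _ ≤ _ := add_le_add_left hle _
    _ = _ := by
        simp only [depolGain, Real.logb]
        field_simp
        ring

end Depolarizing

section MaximallyEntangled

theorem isStarProjection_vecMulVec_star {ι : Type*} [Fintype ι] {v : ι → ℂ}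
    (hv : star v ⬝ᵥ v = 1) : IsStarProjection (vecMulVec v (star v)) where
  isIdempotentElem := by rw [IsIdempotentElem, vecMulVec_mul_vecMulVec, hv, one_smul]
  isSelfAdjoint := (posSemidef_vecMulVec_self_star v).1

variable {ι κ : Type*} [Fintype ι] [DecidableEq κ]

/-- The vector `d^(-1/2) ∑ a, e_a ⊗ e_(c a)`, where `d` is the dimension of the first factor. -/
def maxEntangledVec (c : ι → κ) : ι × κ → ℂ :=
  fun x => if x.2 = c x.1 then ((√(Fintype.card ι))⁻¹ : ℝ) else 0

/-- The rank-one projection onto `maxEntangledVec c`. It is a maximally entangled state when `c` is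
injective. -/
def maxEntangled (c : ι → κ) : Matrix (ι × κ) (ι × κ) ℂ :=
  vecMulVec (maxEntangledVec c) (star (maxEntangledVec c))

theorem maxEntangled_apply (c : ι → κ) (x y : ι × κ) :
    maxEntangled c x y =
      if x.2 = c x.1 ∧ y.2 = c y.1 then ((Fintype.card ι : ℝ)⁻¹ : ℂ) else 0 := by
  have hsq : ((√(Fintype.card ι))⁻¹ : ℂ) * (√(Fintype.card ι) : ℂ)⁻¹ = (Fintype.card ι : ℂ)⁻¹ := by
    rw [← mul_inv, ← Complex.ofReal_mul, Real.mul_self_sqrt (Nat.cast_nonneg _),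
      Complex.ofReal_natCast]
  by_cases hx : x.2 = c x.1 <;> by_cases hy : y.2 = c y.1 <;>
    simp [maxEntangled, maxEntangledVec, vecMulVec_apply, hx, hy, hsq]

theorem trace_maxEntangled [Nonempty ι] [Fintype κ] (c : ι → κ) : (maxEntangled c).trace = 1 := by
  simp [trace, maxEntangled_apply, Fintype.sum_prod_type]

theorem star_maxEntangledVec_dotProduct_self [Nonempty ι] [Fintype κ] (c : ι → κ) :
    star (maxEntangledVec c) ⬝ᵥ maxEntangledVec c = 1 := by
  rw [dotProduct_comm, ← trace_vecMulVec]
  exact trace_maxEntangled c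

theorem isStarProjection_maxEntangled [Nonempty ι] [Fintype κ] (c : ι → κ) :
    IsStarProjection (maxEntangled c) :=
  isStarProjection_vecMulVec_star (star_maxEntangledVec_dotProduct_self c)

theorem posSemidef_maxEntangled [Finite κ] (c : ι → κ) : (maxEntangled c).PosSemidef :=
  posSemidef_vecMulVec_self_star _

theorem ptrace2_maxEntangled [DecidableEq ι] [Fintype κ] {c : ι → κ} (hc : c.Injective) :
    ptrace2 (maxEntangled c) = (Fintype.card ι : ℝ)⁻¹ • (1 : Matrix ι ι ℂ) := by
  ext a b
  simp [ptrace2, maxEntangled_apply, ite_and, hc.eq_iff, one_apply]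

theorem sum_ptrace1_maxEntangled_add [Nonempty ι] [Fintype κ] [AddGroup κ] (c : ι → κ) :
    ∑ s, ptrace1 (maxEntangled fun a => c a + s) = 1 := by
  ext u v
  simp only [Matrix.sum_apply, ptrace1, maxEntangled_apply]
  rw [Finset.sum_comm]
  have hshift (a : ι) (s : κ) : u = c a + s ↔ s = -c a + u := by
    rw [eq_neg_add_iff_add_eq, eq_comm]
  simp [ite_and, hshift, one_apply, eq_comm]

end MaximallyEntangled

section Capacity

variable {n d : ℕ} [NeZero d] {lam : ℝ}

theorem idTensor_depol_maxEntangled {c : Fin d → Fin n} (hc : c.Injective) :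
    idTensor d (depol n lam) (maxEntangled c) =
      (lam + (1 - lam) / (n * d)) • maxEntangled c +
        ((1 - lam) / (n * d)) • (1 - maxEntangled c) := by
  have hd : (d : ℝ) ≠ 0 := NeZero.ne _
  rw [idTensor_depol_eq_smul_add_smul, ptrace2_maxEntangled hc, Fintype.card_fin, smul_kronecker,
    one_kronecker_one, smul_smul, mul_inv_cancel₀ hd, one_smul]

theorem entropy2_ptrace2_sub_entropy2_idTensor_depol_maxEntangled {c : Fin d → Fin n}
    (hc : c.Injective) :
    entropy2 (ptrace2 (maxEntangled c)) - entropy2 (idTensor d (depol n lam) (maxEntangled c)) =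
      depolGain d n lam := by
  rw [idTensor_depol_maxEntangled hc,
    entropy2_smul_add_smul_of_isStarProjection (isStarProjection_maxEntangled c),
    trace_maxEntangled, ptrace2_maxEntangled hc, entropy2_inv_card_smul_one, depolGain,
    Complex.one_re, Fintype.card_prod, Fintype.card_fin, Fintype.card_fin]
  push_cast
  ring

theorem sum_smul_depol_ptrace1_maxEntangled_add [NeZero n] (c : Fin d → Fin n) :
    ∑ s, (n : ℝ)⁻¹ • depol n lam (ptrace1 (maxEntangled fun a => c a + s)) =
      (n : ℝ)⁻¹ • (1 : Matrix (Fin n) (Fin n) ℂ) := by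
  have hn : (n : ℂ) ≠ 0 := NeZero.ne _
  simp only [depol, ← Finset.smul_sum, Finset.sum_add_distrib, sum_ptrace1_maxEntangled_add,
    trace_ptrace1, trace_maxEntangled, one_smul, Finset.sum_const, Finset.card_univ,
    Fintype.card_fin]
  rw [← Nat.cast_smul_eq_nsmul ℂ, smul_smul, ← add_smul]
  push_cast
  rw [div_mul_cancel₀ _ hn, add_sub_cancel, one_smul]

theorem entropy2_sum_smul_depol_le [NeZero n] (hlam : 0 ≤ lam + (1 - lam) / (n * d))
    (hlam1 : lam ≤ 1) {κ : Type*} [Fintype κ] {w : κ → ℝ} (hw : ∀ i, 0 ≤ w i)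
    (hsum : ∑ i, w i = 1) {ρ : κ → Matrix (Fin d × Fin n) (Fin d × Fin n) ℂ}
    (hρ : ∀ i, (ρ i).PosSemidef ∧ (ρ i).trace = 1) :
    entropy2 (∑ i, w i • depol n lam (ptrace1 (ρ i))) ≤ Real.logb 2 n := by
  have hpos : (∑ i, w i • depol n lam (ptrace1 (ρ i))).PosSemidef := by
    refine posSemidef_sum Finset.univ fun i _ => PosSemidef.smul ?_ (hw i)
    rw [← ptrace1_idTensor_depol]
    exact posSemidef_ptrace1 (posSemidef_idTensor_depol hlam hlam1 (hρ i).1)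
  have htrace : (∑ i, w i • depol n lam (ptrace1 (ρ i))).trace = 1 := by
    simp only [trace_sum, trace_smul, ← ptrace1_idTensor_depol, trace_ptrace1,
      trace_idTensor_depol, (hρ _).2, ← Finset.sum_smul, hsum, one_smul]
  simpa only [Fintype.card_fin] using entropy2_le_logb_card hpos htrace

/-- The rate of a weighted family of states over a channel `N` with `d`-dimensional entanglement
assistance, whose supremum over the finite ensembles of states is `Cprod d N`. -/
def ensembleRate (d : ℕ) {ι κ σ : Type*} [Fintype ι] [DecidableEq κ] [Fintype κ] [Fintype σ]
    (N : Matrix ι ι ℂ → Matrix κ κ ℂ) (w : σ → ℝ)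
    (ρ : σ → Matrix (Fin d × ι) (Fin d × ι) ℂ) : ℝ :=
  entropy2 (∑ i, w i • N (ptrace1 (ρ i))) +
    ∑ i, w i * (entropy2 (ptrace2 (ρ i)) - entropy2 (idTensor d N (ρ i)))

theorem ensembleRate_depol_le [NeZero n] (hlam : 0 ≤ lam + (1 - lam) / (n * d))
    (hlam1 : lam ≤ 1) {κ : Type*} [Fintype κ] {w : κ → ℝ} (hw : ∀ i, 0 ≤ w i)
    (hsum : ∑ i, w i = 1) {ρ : κ → Matrix (Fin d × Fin n) (Fin d × Fin n) ℂ}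
    (hρ : ∀ i, (ρ i).PosSemidef ∧ (ρ i).trace = 1) :
    ensembleRate d (depol n lam) w ρ ≤ Real.logb 2 n + depolGain d n lam := by
  refine add_le_add (entropy2_sum_smul_depol_le hlam hlam1 hw hsum hρ) ?_
  calc _ ≤ ∑ i, w i * depolGain d n lam := Finset.sum_le_sum fun i _ =>
        mul_le_mul_of_nonneg_left (entropy2_ptrace2_sub_entropy2_idTensor_depol_le hlam hlam1
          (hρ i).1 (hρ i).2) (hw i)
    _ = _ := by rw [← Finset.sum_mul, hsum, one_mul]

theorem ensembleRate_depol_maxEntangled_add [NeZero n] {c : Fin d → Fin n} (hc : c.Injective) :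
    ensembleRate d (depol n lam) (fun _ : Fin n => (n : ℝ)⁻¹)
      (fun s => maxEntangled fun a => c a + s) = Real.logb 2 n + depolGain d n lam := by
  have hn : (n : ℝ) ≠ 0 := NeZero.ne _
  have hmax := entropy2_inv_card_smul_one (ι := Fin n)
  have hgain (s : Fin n) := entropy2_ptrace2_sub_entropy2_idTensor_depol_maxEntangled (lam := lam)
    (c := fun a => c a + s) ((add_left_injective s).comp hc)
  rw [Fintype.card_fin] at hmax
  simp only [ensembleRate, sum_smul_depol_ptrace1_maxEntangled_add, hmax, hgain, Finset.sum_const,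
    Finset.card_univ, Fintype.card_fin, nsmul_eq_mul, mul_inv_cancel_left₀ hn]

theorem statement11_general (hdn : d ≤ n) (hlam : 0 ≤ lam + (1 - lam) / ((n : ℝ) * d))
    (hlam1 : lam ≤ 1) :
    Cprod d (depol n lam) =
      Real.logb 2 ((n : ℝ) * d) +
        (lam + (1 - lam) / ((n : ℝ) * d)) * Real.logb 2 (lam + (1 - lam) / ((n : ℝ) * d)) +
        ((n : ℝ) * d - 1) * ((1 - lam) / ((n : ℝ) * d)) *
          Real.logb 2 ((1 - lam) / ((n : ℝ) * d)) := by
  have : NeZero n := ⟨((Nat.pos_of_neZero d).trans_le hdn).ne'⟩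
  have hn : (n : ℝ) ≠ 0 := NeZero.ne _
  have hCprod : Cprod d (depol n lam) = Real.logb 2 n + depolGain d n lam := by
    refine IsGreatest.csSup_eq ⟨?_, ?_⟩
    · exact ⟨n, fun _ => (n : ℝ)⁻¹, fun s => maxEntangled fun a => Fin.castLE hdn a + s,
        fun _ => by positivity, by simp [hn],
        fun s => ⟨posSemidef_maxEntangled _, trace_maxEntangled _⟩,
        (ensembleRate_depol_maxEntangled_add (Fin.castLE_injective hdn)).symm⟩
    · rintro _ ⟨k, w, ρ, hw, hsum, hρ, rfl⟩
      exact ensembleRate_depol_le hlam hlam1 hw hsum hρ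
  rw [hCprod, depolGain, Real.logb_mul hn (NeZero.ne _)]
  ring

end Capacity

/-- the product-state `d`-restricted classical capacity of the depolarizing
channel equals
`log₂(nd) + (λ + (1−λ)/(nd)) log₂(λ + (1−λ)/(nd)) + (nd−1)((1−λ)/(nd)) log₂((1−λ)/(nd))`. -/
theorem statement11 (n d : ℕ) (hd : 1 ≤ d) (hdn : d ≤ n) (lam : ℝ) (hl0 : 0 ≤ lam)
    (hl1 : lam ≤ 1) :
    Cprod d (depol n lam) =
      Real.logb 2 ((n : ℝ) * d) +
        (lam + (1 - lam) / ((n : ℝ) * d)) * Real.logb 2 (lam + (1 - lam) / ((n : ℝ) * d)) +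
        ((n : ℝ) * d - 1) * ((1 - lam) / ((n : ℝ) * d)) *
          Real.logb 2 ((1 - lam) / ((n : ℝ) * d)) := by
  have : NeZero d := ⟨Nat.one_le_iff_ne_zero.1 hd⟩
  exact statement11_general hdn
    (add_nonneg hl0 (div_nonneg (sub_nonneg.2 hl1) (by positivity))) hl1
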